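/- Relative entropy identity: Let ψ̂ be C³ on ℝ^{19} × (0,∞) with η̂, ê defined as in the constitutive theory. Let U = (ξ, v, θ) and Ū = (ξ̄, v̄, θ̄) be C² solutions, with θ, θ̄ > 0, of the augmented thermoviscoelasticity system with respective C¹ viscous stress, heat flux and supply fields (Z, Q, r) and (Z̄, Q̄, r̄), each satisfying its entropy identity ∂_t η̂ − ∂_α(Q_α/θ) = ∇θ·Q/θ² + (∂_α v_i)Z_{iα}/θ + r/θ (and similarly for the barred solution). Then the following identity holds pointwise: ∂_t[ ψ̂(ξ,θ|ξ̄,θ̄) + ½|v − v̄|² + (η̂(ξ,θ) − η̂(ξ̄,θ̄))(θ − θ̄) ] − ∂_α[ ((∂ψ̂/∂ξ^B)(ξ,θ) − (∂ψ̂/∂ξ^B)(ξ̄,θ̄)) (∂Φ^B/∂F_{iα})(F) (v_i − v̄_i) + (Z_{iα} − Z̄_{iα})(v_i − v̄_i) + (θ − θ̄)(Q_α/θ − Q̄_α/θ̄) ] = −(∂_t θ̄) η̂(ξ,θ|ξ̄,θ̄) + (∂_t ξ̄^B) (∂ψ̂/∂ξ^B)(ξ,θ|ξ̄,θ̄) +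 ∂_α[(∂ψ̂/∂ξ^B)(ξ̄,θ̄)] ((∂Φ^B/∂F_{iα})(F) − (∂Φ^B/∂F_{iα})(F̄))(v_i − v̄_i) + (∂_α v̄_i) ((∂ψ̂/∂ξ^B)(ξ,θ) − (∂ψ̂/∂ξ^B)(ξ̄,θ̄)) ((∂Φ^B/∂F_{iα})(F) − (∂Φ^B/∂F_{iα})(F̄)) − θθ̄ ((∂_α v_i)/θ − (∂_α v̄_i)/θ̄)(Z_{iα}/θ − Z̄_{iα}/θ̄) − (θ̄ Q/θ − θ Q̄/θ̄)·(∇θ/θ − ∇θ̄/θ̄) + (θ − θ̄)(r/θ − r̄/θ̄), with summation over repeated indices B, i, α. -/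

import Mathlib

open Real MeasureTheory Filter Set Topology ENNReal NNReal

noncomputable section

abbrev Vec3 := Fin 3 → ℝ
abbrev Mat3 := Fin 3 → Fin 3 → ℝ
abbrev Xi := Mat3 × Mat3 × ℝ
abbrev Idx := (Fin 3 × Fin 3) ⊕ ((Fin 3 × Fin 3) ⊕ Unit)
abbrev FullState := Xi × Vec3 × ℝ

/-- Levi-Civita symbol on three indices. -/
def eps3 (i j k : Fin 3) : ℝ :=
  if (i, j, k) = (0, 1, 2) ∨ (i, j, k) = (1, 2, 0) ∨ (i, j, k) = (2, 0, 1) then 1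
  else if (i, j, k) = (2, 1, 0) ∨ (i, j, k) = (1, 0, 2) ∨ (i, j, k) = (0, 2, 1) then -1
  else 0

/-- Cofactor matrix (cof F)_{iα} = (1/2) ε_{ijk} ε_{αβγ} F_{jβ} F_{kγ}. -/
def cof3 (F : Mat3) : Mat3 := fun i α =>
  (1/2) * ∑ j, ∑ k, ∑ β, ∑ γ, eps3 i j k * eps3 α β γ * F j β * F k γ

/-- det F = (1/6) ε_{ijk} ε_{αβγ} F_{iα} F_{jβ} F_{kγ}. -/
def det3 (F : Mat3) : ℝ :=
  (1/6) * ∑ i, ∑ j, ∑ k, ∑ α, ∑ β, ∑ γ,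
    eps3 i j k * eps3 α β γ * F i α * F j β * F k γ

/-- The vector of null Lagrangians Φ(F) = (F, cof F, det F). -/
def Phi3 (F : Mat3) : Xi := (F, cof3 F, det3 F)

/-- Component ξ^B of ξ ∈ ℝ^19. -/
def xiComp (ξ : Xi) : Idx → ℝ
  | .inl (i, α) => ξ.1 i α
  | .inr (.inl (i, α)) => ξ.2.1 i α
  | .inr (.inr _) => ξ.2.2

def updMat (F : Mat3) (i α : Fin 3) (s : ℝ) : Mat3 :=
  Function.update F i (Function.update (F i) α s)

/-- Update component B of ξ to value s. -/
def xiUpd (ξ : Xi) : Idx → ℝ → Xi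
  | .inl (i, α), s => (updMat ξ.1 i α s, ξ.2)
  | .inr (.inl (i, α)), s => (ξ.1, updMat ξ.2.1 i α s, ξ.2.2)
  | .inr (.inr _), s => (ξ.1, ξ.2.1, s)

/-- ∂Φ^B/∂F_{iα}(F). -/
def dPhi (B : Idx) (i α : Fin 3) (F : Mat3) : ℝ :=
  deriv (fun s => xiComp (Phi3 (updMat F i α s)) B) (F i α)

/-- Partial derivative ∂ψ̂/∂ξ^B of a function ψ̂(ξ, θ). -/
def dXi (B : Idx) (ψ : Xi → ℝ → ℝ) (ξ : Xi) (θ : ℝ) : ℝ :=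
  deriv (fun s => ψ (xiUpd ξ B s) θ) (xiComp ξ B)

/-- Partial derivative ∂ψ̂/∂θ. -/
def dTh (ψ : Xi → ℝ → ℝ) (ξ : Xi) (θ : ℝ) : ℝ :=
  deriv (fun s => ψ ξ s) θ

/-- η̂(ξ,θ) = −∂_θ ψ̂(ξ,θ). -/
def etaHat (ψ : Xi → ℝ → ℝ) (ξ : Xi) (θ : ℝ) : ℝ := -(dTh ψ ξ θ)

/-- ê(ξ,θ) = ψ̂(ξ,θ) − θ ∂_θ ψ̂(ξ,θ). -/
def eHat (ψ : Xi → ℝ → ℝ) (ξ : Xi) (θ : ℝ) : ℝ := ψ ξ θ - θ * dTh ψ ξ θ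

/-- Spatial partial derivative ∂_α of a space-time field. -/
def pdx (α : Fin 3) (f : Vec3 → ℝ → ℝ) (x : Vec3) (t : ℝ) : ℝ :=
  deriv (fun s => f (Function.update x α s) t) (x α)

/-- Time derivative ∂_t of a space-time field. -/
def pdt (f : Vec3 → ℝ → ℝ) (x : Vec3) (t : ℝ) : ℝ :=
  deriv (fun s => f x s) t

def mnorm (F : Mat3) : ℝ := Real.sqrt (∑ i, ∑ j, (F i j)^2)
def vnorm (v : Vec3) : ℝ := Real.sqrt (∑ i, (v i)^2)

/-- |ξ|_{p,q,r} = |F|^p + |ζ|^q + |w|^r. -/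
def xiNorm (p q r : ℝ) (ξ : Xi) : ℝ :=
  mnorm ξ.1 ^ p + mnorm ξ.2.1 ^ q + |ξ.2.2| ^ r

/-- The compact set Γ_{M,δ}. -/
def Gamma (M δ : ℝ) : Set FullState :=
  {U | mnorm U.1.1 ≤ M ∧ mnorm U.1.2.1 ≤ M ∧ |U.1.2.2| ≤ M ∧
       vnorm U.2.1 ≤ M ∧ δ ≤ U.2.2 ∧ U.2.2 ≤ M}

/-- Relative free energy ψ̂(ξ,θ|ξ̄,θ̄). -/
def psiRel (ψ : Xi → ℝ → ℝ) (ξ : Xi) (θ : ℝ) (ξ' : Xi) (θ' : ℝ) : ℝ :=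
  ψ ξ θ - ψ ξ' θ' - (∑ B : Idx, dXi B ψ ξ' θ' * (xiComp ξ B - xiComp ξ' B))
    + etaHat ψ ξ' θ' * (θ - θ')

/-- Relative entropy function η̂(ξ,θ|ξ̄,θ̄). -/
def etaRel (ψ : Xi → ℝ → ℝ) (ξ : Xi) (θ : ℝ) (ξ' : Xi) (θ' : ℝ) : ℝ :=
  etaHat ψ ξ θ - etaHat ψ ξ' θ'
    - (∑ B : Idx, dXi B (etaHat ψ) ξ' θ' * (xiComp ξ B - xiComp ξ' B))
    - dTh (etaHat ψ) ξ' θ' * (θ - θ')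

/-- Relative stress (∂ψ̂/∂ξ^B)(ξ,θ|ξ̄,θ̄). -/
def dXiRel (B : Idx) (ψ : Xi → ℝ → ℝ) (ξ : Xi) (θ : ℝ) (ξ' : Xi) (θ' : ℝ) : ℝ :=
  dXi B ψ ξ θ - dXi B ψ ξ' θ'
    - (∑ A : Idx, dXi A (dXi B ψ) ξ' θ' * (xiComp ξ A - xiComp ξ' A))
    - dTh (dXi B ψ) ξ' θ' * (θ - θ')

/-- Relative entropy I(ξ,v,θ|ξ̄,v̄,θ̄). -/
def relEnt (ψ : Xi → ℝ → ℝ) (ξ : Xi) (v : Vec3) (θ : ℝ)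
    (ξ' : Xi) (v' : Vec3) (θ' : ℝ) : ℝ :=
  psiRel ψ ξ θ ξ' θ' + (1/2) * (∑ i, (v i - v' i)^2)
    + (etaHat ψ ξ θ - etaHat ψ ξ' θ') * (θ - θ')

/-- ψ̂ is C³ on ℝ^19 × (0,∞). -/
def PsiC3 (ψ : Xi → ℝ → ℝ) : Prop :=
  ContDiffOn ℝ 3 (fun p : Xi × ℝ => ψ p.1 p.2) (Set.univ ×ˢ Set.Ioi (0:ℝ))

/-- ∇²_ξ ψ̂ > 0 and ∂_θ η̂ > 0. -/
def PsiConvex (ψ : Xi → ℝ → ℝ) : Prop :=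
  ∀ ξ : Xi, ∀ θ : ℝ, 0 < θ →
    (∀ u : Idx → ℝ, u ≠ 0 →
      0 < ∑ A : Idx, ∑ B : Idx, dXi A (dXi B ψ) ξ θ * u A * u B) ∧
    0 < dTh (etaHat ψ) ξ θ

def gradFnorm (ψ : Xi → ℝ → ℝ) (ξ : Xi) (θ : ℝ) : ℝ :=
  Real.sqrt (∑ i, ∑ α, (dXi (.inl (i, α)) ψ ξ θ)^2)
def gradZnorm (ψ : Xi → ℝ → ℝ) (ξ : Xi) (θ : ℝ) : ℝ :=
  Real.sqrt (∑ i, ∑ α, (dXi (.inr (.inl (i, α))) ψ ξ θ)^2)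
def gradWnorm (ψ : Xi → ℝ → ℝ) (ξ : Xi) (θ : ℝ) : ℝ :=
  |dXi (.inr (.inr ())) ψ ξ θ|

/-- The growth conditions (gr.con.1)-(gr.con.3). -/
def GrowthCond (ψ : Xi → ℝ → ℝ) (c p q r ℓ : ℝ) : Prop :=
  0 < c ∧
  (∀ ξ : Xi, ∀ θ : ℝ, 0 < θ →
    c * (xiNorm p q r ξ + θ ^ ℓ) - c ≤ eHat ψ ξ θ ∧
    eHat ψ ξ θ ≤ c * (xiNorm p q r ξ + θ ^ ℓ) + c) ∧
  (∀ ε : ℝ, 0 < ε → ∃ R : ℝ, ∀ ξ : Xi, ∀ θ : ℝ, 0 < θ →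
    R < xiNorm p q r ξ + θ ^ ℓ →
    gradFnorm ψ ξ θ + gradZnorm ψ ξ θ ^ (p/(p-1)) + gradWnorm ψ ξ θ ^ (p/(p-2))
      ≤ ε * (xiNorm p q r ξ + θ ^ ℓ)) ∧
  (∀ ε : ℝ, 0 < ε → ∃ R : ℝ, ∀ ξ : Xi, ∀ θ : ℝ, 0 < θ →
    R < xiNorm p q r ξ + θ ^ ℓ →
    |dTh ψ ξ θ| ≤ ε * (xiNorm p q r ξ + θ ^ ℓ))

/-- The augmented thermoviscoelasticity system with fields (Z, Q, r), at a point (x,t). -/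
def AugSys (ψ : Xi → ℝ → ℝ) (ξf : Vec3 → ℝ → Xi) (vf : Vec3 → ℝ → Vec3)
    (θf : Vec3 → ℝ → ℝ) (Z : Vec3 → ℝ → Mat3) (Q : Vec3 → ℝ → Vec3)
    (r : Vec3 → ℝ → ℝ) (x : Vec3) (t : ℝ) : Prop :=
  (∀ B : Idx, pdt (fun y s => xiComp (ξf y s) B) x t
      = ∑ α, pdx α (fun y s => ∑ i, dPhi B i α (ξf y s).1 * vf y s i) x t) ∧
  (∀ i, pdt (fun y s => vf y s i) x t
      = ∑ α, pdx α (fun y s =>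
          ∑ B : Idx, dXi B ψ (ξf y s) (θf y s) * dPhi B i α (ξf y s).1) x t
        + ∑ α, pdx α (fun y s => Z y s i α) x t) ∧
  (pdt (fun y s => (1/2) * (∑ i, (vf y s i)^2) + eHat ψ (ξf y s) (θf y s)) x t
      = ∑ α, pdx α (fun y s => ∑ i,
          (∑ B : Idx, dXi B ψ (ξf y s) (θf y s) * dPhi B i α (ξf y s).1) * vf y s i) x t
        + ∑ α, pdx α (fun y s => ∑ i, Z y s i α * vf y s i) x t
        + ∑ α, pdx α (fun y s => Q y s α) x t + r x t) ∧
  (∀ i α β, pdx α (fun y s => (ξf y s).1 i β) x t = pdx β (fun y s => (ξf y s).1 i α) x t)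

/-- The entropy production identity for the augmented system. -/
def EntropyIdent (ψ : Xi → ℝ → ℝ) (ξf : Vec3 → ℝ → Xi) (vf : Vec3 → ℝ → Vec3)
    (θf : Vec3 → ℝ → ℝ) (Z : Vec3 → ℝ → Mat3) (Q : Vec3 → ℝ → Vec3)
    (r : Vec3 → ℝ → ℝ) (x : Vec3) (t : ℝ) : Prop :=
  pdt (fun y s => etaHat ψ (ξf y s) (θf y s)) x t
    - ∑ α, pdx α (fun y s => Q y s α / θf y s) x t
  = (∑ α, pdx α θf x t * Q x t α) / (θf x t)^2
    + (∑ α, ∑ i, pdx α (fun y s => vf y s i) x t * Z x t i α) / θf x t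
    + r x t / θf x t

/-- Newtonian viscous stress Z = μ ∇v. -/
def newtonianZ (μ : Mat3 → ℝ → ℝ) (ξf : Vec3 → ℝ → Xi) (vf : Vec3 → ℝ → Vec3)
    (θf : Vec3 → ℝ → ℝ) : Vec3 → ℝ → Mat3 :=
  fun x t i α => μ (ξf x t).1 (θf x t) * pdx α (fun y s => vf y s i) x t

/-- Fourier heat flux Q = k ∇θ. -/
def fourierQ (k : Mat3 → ℝ → ℝ) (ξf : Vec3 → ℝ → Xi)
    (θf : Vec3 → ℝ → ℝ) : Vec3 → ℝ → Vec3 :=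
  fun x t α => k (ξf x t).1 (θf x t) * pdx α θf x t

/-- The entropy identity for Newtonian viscosity and Fourier heat conduction (zero supply). -/
def EntropyIdentNF (ψ : Xi → ℝ → ℝ) (μ k : Mat3 → ℝ → ℝ) (ξf : Vec3 → ℝ → Xi)
    (vf : Vec3 → ℝ → Vec3) (θf : Vec3 → ℝ → ℝ) (x : Vec3) (t : ℝ) : Prop :=
  pdt (fun y s => etaHat ψ (ξf y s) (θf y s)) x t
    - ∑ α, pdx α (fun y s =>
        k (ξf y s).1 (θf y s) * pdx α θf y s / θf y s) x t
  = k (ξf x t).1 (θf x t) * (∑ α, (pdx α θf x t)^2) / (θf x t)^2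
    + μ (ξf x t).1 (θf x t) *
        (∑ α, ∑ i, (pdx α (fun y s => vf y s i) x t)^2) / θf x t

/-- Fundamental domain of the 3-torus. -/
def Box : Set Vec3 := Set.Icc 0 1

/-- Periodicity in the space variables with period 1. -/
def PeriodicX {E : Type*} (f : Vec3 → ℝ → E) : Prop :=
  ∀ (x : Vec3) (t : ℝ) (α : Fin 3), f (x + Pi.single α 1) t = f x t

/-- C^n regularity of a space-time field. -/
def FieldC {E : Type*} [NormedAddCommGroup E] [NormedSpace ℝ E]
    (n : ℕ) (f : Vec3 → ℝ → E) : Prop :=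
  ContDiff ℝ n (fun p : Vec3 × ℝ => f p.1 p.2)

/-- Spatial integral of the relative entropy at time t. -/
def relEntInt (ψ : Xi → ℝ → ℝ) (ξf : Vec3 → ℝ → Xi) (vf : Vec3 → ℝ → Vec3)
    (θf : Vec3 → ℝ → ℝ) (ξf' : Vec3 → ℝ → Xi) (vf' : Vec3 → ℝ → Vec3)
    (θf' : Vec3 → ℝ → ℝ) (t : ℝ) : ℝ :=
  ∫ x in Box, relEnt ψ (ξf x t) (vf x t) (θf x t) (ξf' x t) (vf' x t) (θf' x t)


/-- Spatial partial derivative of a static field. -/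
def pds (α : Fin 3) (f : Vec3 → ℝ) (x : Vec3) : ℝ :=
  deriv (fun s => f (Function.update x α s)) (x α)

/-- Deformation gradient ∇y of a static map y : ℝ³ → ℝ³. -/
def gradV (y : Vec3 → Vec3) (x : Vec3) : Mat3 :=
  fun i α => pds α (fun z => y z i) x

/-- ∂ψ/∂F_{iα} for ψ = ψ(F,θ). -/
def dFM (i α : Fin 3) (ψ : Mat3 → ℝ → ℝ) (F : Mat3) (θ : ℝ) : ℝ :=
  deriv (fun s => ψ (updMat F i α s) θ) (F i α)

/-- ∂ψ/∂θ for ψ = ψ(F,θ). -/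
def dThM (ψ : Mat3 → ℝ → ℝ) (F : Mat3) (θ : ℝ) : ℝ :=
  deriv (fun s => ψ F s) θ

/-- Index set for the full extended state U = (ξ, v, θ) ∈ ℝ²³. -/
abbrev UIdx := Idx ⊕ (Fin 3 ⊕ Unit)

def uComp (U : FullState) : UIdx → ℝ
  | .inl B => xiComp U.1 B
  | .inr (.inl i) => U.2.1 i
  | .inr (.inr _) => U.2.2

def uUpd (U : FullState) : UIdx → ℝ → FullState
  | .inl B, s => (xiUpd U.1 B s, U.2)
  | .inr (.inl i), s => (U.1, Function.update U.2.1 i s, U.2.2)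
  | .inr (.inr _), s => (U.1, U.2.1, s)

/-- Partial derivative in the state variables (ξ,v,θ). -/
def pdU (B : UIdx) (f : FullState → ℝ) (U : FullState) : ℝ :=
  deriv (fun s => f (uUpd U B s)) (uComp U B)

/-- Second partial derivative in the state variables (ξ,v,θ). -/
def pdU2 (A B : UIdx) (f : FullState → ℝ) (U : FullState) : ℝ :=
  pdU A (fun V => pdU B f V) U

/-- Test functions for the weak formulation on T³ × [0,T):
C¹, periodic in x, compactly supported in time in [0,T). -/
def TestFun (T : ℝ) (φ : Vec3 → ℝ → ℝ) : Prop :=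
  ContDiff ℝ 1 (fun p : Vec3 × ℝ => φ p.1 p.2) ∧ PeriodicX φ ∧
  ∃ T' : ℝ, T' < T ∧ ∀ (x : Vec3) (t : ℝ), T' ≤ t → φ x t = 0

/-- The elastic stress Σ_{iα} of the augmented constitutive theory. -/
def SigmaA (ψ : Xi → ℝ → ℝ) (ξ : Xi) (θ : ℝ) (i α : Fin 3) : ℝ :=
  ∑ B : Idx, dXi B ψ ξ θ * dPhi B i α ξ.1


def eX (B : Idx) : Xi := xiUpd 0 B 1

lemma updMat_eq (F : Mat3) (i α : Fin 3) (s : ℝ) :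
    updMat F i α s = F + (s - F i α) • updMat 0 i α 1 := by
  ext j β
  by_cases hj : j = i
  · subst hj
    by_cases hb : β = α
    · subst hb; simp [updMat]
    · simp [updMat, hb]
  · simp [updMat, hj]

lemma xiUpd_eq (ξ : Xi) (B : Idx) (s : ℝ) :
    xiUpd ξ B s = ξ + (s - xiComp ξ B) • eX B := by
  rcases B with ⟨i, α⟩ | ⟨i, α⟩ | u
  · simp only [xiUpd, xiComp, eX]
    rw [updMat_eq]
    ext <;> simp
  · simp only [xiUpd, xiComp, eX]
    rw [updMat_eq]
    ext <;> simp
  · simp only [xiUpd, xiComp, eX]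
    ext <;> simp

lemma mat_decomp (F : Mat3) : F = ∑ q : Fin 3 × Fin 3, F q.1 q.2 • updMat 0 q.1 q.2 1 := by
  ext j β
  rw [Fintype.sum_prod_type]
  simp only [Finset.sum_apply, Pi.smul_apply, smul_eq_mul]
  rw [Finset.sum_eq_single j, Finset.sum_eq_single β]
  · simp [updMat]
  · intro b _ hb; simp [updMat, hb.symm]
  · simp
  · intro b _ hb; simp [updMat, hb.symm]
  · simp

lemma xi_decomp (ξ : Xi) : ξ = ∑ B : Idx, xiComp ξ B • eX B := by
  rw [Fintype.sum_sum_type, Fintype.sum_sum_type]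
  simp only [xiComp, eX, xiUpd]
  refine Prod.ext ?_ (Prod.ext ?_ ?_)
  · simp only [Prod.fst_add, Prod.fst_sum, Prod.smul_fst, Prod.fst_zero, smul_zero, Finset.sum_const_zero, add_zero]
    exact mat_decomp ξ.1
  · simp only [Prod.fst_add, Prod.snd_add, Prod.snd_sum, Prod.smul_snd, Prod.fst_sum, Prod.smul_fst, Prod.fst_zero, Prod.snd_zero, smul_zero, Finset.sum_const_zero, add_zero, zero_add]
    exact mat_decomp ξ.2.1
  · simp [Prod.snd_sum]

/-- coordinate functional as continuous linear map -/
def xiL (B : Idx) : Xi →L[ℝ] ℝ := LinearMap.toContinuousLinearMap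
  { toFun := fun ξ => xiComp ξ B
    map_add' := by intro a b; rcases B with ⟨i, α⟩ | ⟨i, α⟩ | u <;> simp [xiComp]
    map_smul' := by intro a b; rcases B with ⟨i, α⟩ | ⟨i, α⟩ | u <;> simp [xiComp] }

lemma xiL_apply (B : Idx) (ξ : Xi) : xiL B ξ = xiComp ξ B := rfl

lemma dXi_eq (g : Xi → ℝ → ℝ) (B : Idx) (ξ : Xi) (θ : ℝ)
    (hg : DifferentiableAt ℝ (fun p : Xi × ℝ => g p.1 p.2) (ξ, θ)) :
    dXi B g ξ θ = fderiv ℝ (fun p : Xi × ℝ => g p.1 p.2) (ξ, θ) (eX B, 0) := by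
  unfold dXi
  have hc : HasDerivAt (fun s : ℝ => ((xiUpd ξ B s, θ) : Xi × ℝ)) (eX B, 0) (xiComp ξ B) := by
    simp only [xiUpd_eq]
    refine HasDerivAt.prodMk ?_ (hasDerivAt_const _ _)
    have := (((hasDerivAt_id (xiComp ξ B)).sub_const (xiComp ξ B)).smul_const (eX B)).const_add ξ
    simpa using this
  have h0 : ((xiUpd ξ B (xiComp ξ B), θ) : Xi × ℝ) = (ξ, θ) := by
    rw [xiUpd_eq]; simp
  have hg' : HasFDerivAt (fun p : Xi × ℝ => g p.1 p.2)
      (fderiv ℝ (fun p : Xi × ℝ => g p.1 p.2) (ξ, θ)) (xiUpd ξ B (xiComp ξ B), θ) := by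
    rw [h0]; exact hg.hasFDerivAt
  exact (HasFDerivAt.comp_hasDerivAt (f := fun s : ℝ => ((xiUpd ξ B s, θ) : Xi × ℝ))
    (xiComp ξ B) hg' hc).deriv

lemma dTh_eq (g : Xi → ℝ → ℝ) (ξ : Xi) (θ : ℝ)
    (hg : DifferentiableAt ℝ (fun p : Xi × ℝ => g p.1 p.2) (ξ, θ)) :
    dTh g ξ θ = fderiv ℝ (fun p : Xi × ℝ => g p.1 p.2) (ξ, θ) (0, 1) := by
  unfold dTh
  have hc : HasDerivAt (fun s : ℝ => ((ξ, s) : Xi × ℝ)) (0, 1) θ :=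
    (hasDerivAt_const _ _).prodMk (hasDerivAt_id θ)
  exact (HasFDerivAt.comp_hasDerivAt (f := fun s : ℝ => ((ξ, s) : Xi × ℝ)) θ
    hg.hasFDerivAt hc).deriv

lemma chain_rule (g : Xi → ℝ → ℝ) (c : ℝ → Xi) (τ : ℝ → ℝ) (s₀ : ℝ)
    (hg : DifferentiableAt ℝ (fun p : Xi × ℝ => g p.1 p.2) (c s₀, τ s₀))
    (hc : DifferentiableAt ℝ c s₀) (hτ : DifferentiableAt ℝ τ s₀) :
    HasDerivAt (fun s => g (c s) (τ s))
      (∑ B : Idx, dXi B g (c s₀) (τ s₀) * deriv (fun s => xiComp (c s) B) s₀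
        + dTh g (c s₀) (τ s₀) * deriv τ s₀) s₀ := by
  have h := HasFDerivAt.comp_hasDerivAt (f := fun s : ℝ => ((c s, τ s) : Xi × ℝ)) s₀
    hg.hasFDerivAt (hc.hasDerivAt.prodMk hτ.hasDerivAt)
  have e : ∀ B, deriv (fun s => xiComp (c s) B) s₀ = xiComp (deriv c s₀) B := fun B =>
    ((xiL B).hasFDerivAt.comp_hasDerivAt s₀ hc.hasDerivAt).deriv
  have key : fderiv ℝ (fun p : Xi × ℝ => g p.1 p.2) (c s₀, τ s₀) (deriv c s₀, deriv τ s₀)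
      = ∑ B : Idx, dXi B g (c s₀) (τ s₀) * deriv (fun s => xiComp (c s) B) s₀
        + dTh g (c s₀) (τ s₀) * deriv τ s₀ := by
    have d : ((deriv c s₀, deriv τ s₀) : Xi × ℝ)
        = ∑ B : Idx, xiComp (deriv c s₀) B • ((eX B, 0) : Xi × ℝ) + deriv τ s₀ • ((0, 1) : Xi × ℝ) := by
      refine Prod.ext ?_ ?_
      · simp only [Prod.fst_add, Prod.fst_sum, Prod.smul_fst, smul_zero, add_zero]
        exact xi_decomp _
      · simp [Prod.snd_sum]
    rw [d, map_add, map_sum, map_smul, dTh_eq g _ _ hg]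
    simp only [map_smul, e, dXi_eq g _ _ _ hg, smul_eq_mul]
    congr 1
    · exact Finset.sum_congr rfl fun B _ => mul_comm _ _
    · ring
  rw [← key]
  exact h

lemma psi_contDiffAt {ψ : Xi → ℝ → ℝ} (hψ : PsiC3 ψ) (p : Xi × ℝ) (hp : 0 < p.2) :
    ContDiffAt ℝ 3 (fun p : Xi × ℝ => ψ p.1 p.2) p :=
  hψ.contDiffAt ((isOpen_univ.prod isOpen_Ioi).mem_nhds ⟨trivial, hp⟩)

lemma pos_nhds (p : Xi × ℝ) (hp : 0 < p.2) : ∀ᶠ q : Xi × ℝ in 𝓝 p, 0 < q.2 :=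
  (continuous_snd.tendsto p).eventually (lt_mem_nhds hp)

lemma psi_fderiv {ψ : Xi → ℝ → ℝ} (hψ : PsiC3 ψ) (p : Xi × ℝ) (hp : 0 < p.2) :
    DifferentiableAt ℝ (fderiv ℝ (fun p : Xi × ℝ => ψ p.1 p.2)) p := by
  have h := (psi_contDiffAt hψ p hp).fderiv_right (m := 2) (by norm_num)
  exact h.differentiableAt (by norm_num)

lemma dXi_ev {ψ : Xi → ℝ → ℝ} (hψ : PsiC3 ψ) (B : Idx) (p : Xi × ℝ) (hp : 0 < p.2) :
    (fun q : Xi × ℝ => dXi B ψ q.1 q.2) =ᶠ[𝓝 p]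
      fun q => fderiv ℝ (fun p : Xi × ℝ => ψ p.1 p.2) q (eX B, 0) := by
  filter_upwards [pos_nhds p hp] with q hq
  exact dXi_eq ψ B q.1 q.2 ((psi_contDiffAt hψ q hq).differentiableAt (by norm_num))

lemma dTh_ev {ψ : Xi → ℝ → ℝ} (hψ : PsiC3 ψ) (p : Xi × ℝ) (hp : 0 < p.2) :
    (fun q : Xi × ℝ => dTh ψ q.1 q.2) =ᶠ[𝓝 p]
      fun q => fderiv ℝ (fun p : Xi × ℝ => ψ p.1 p.2) q (0, 1) := by
  filter_upwards [pos_nhds p hp] with q hq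
  exact dTh_eq ψ q.1 q.2 ((psi_contDiffAt hψ q hq).differentiableAt (by norm_num))

lemma dXi_diff {ψ : Xi → ℝ → ℝ} (hψ : PsiC3 ψ) (B : Idx) (p : Xi × ℝ) (hp : 0 < p.2) :
    DifferentiableAt ℝ (fun q : Xi × ℝ => dXi B ψ q.1 q.2) p :=
  ((psi_fderiv hψ p hp).clm_apply (differentiableAt_const _)).congr_of_eventuallyEq (dXi_ev hψ B p hp)

lemma dTh_diff {ψ : Xi → ℝ → ℝ} (hψ : PsiC3 ψ) (p : Xi × ℝ) (hp : 0 < p.2) :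
    DifferentiableAt ℝ (fun q : Xi × ℝ => dTh ψ q.1 q.2) p :=
  ((psi_fderiv hψ p hp).clm_apply (differentiableAt_const _)).congr_of_eventuallyEq (dTh_ev hψ p hp)

lemma fderiv_apply_const {ψ : Xi → ℝ → ℝ} (hψ : PsiC3 ψ) (p : Xi × ℝ) (hp : 0 < p.2) (a b : Xi × ℝ) :
    fderiv ℝ (fun q => fderiv ℝ (fun p : Xi × ℝ => ψ p.1 p.2) q a) p b
      = fderiv ℝ (fderiv ℝ (fun p : Xi × ℝ => ψ p.1 p.2)) p b a := by
  rw [fderiv_clm_apply (psi_fderiv hψ p hp) (differentiableAt_const _)]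
  simp

lemma psi_symm {ψ : Xi → ℝ → ℝ} (hψ : PsiC3 ψ) (p : Xi × ℝ) (hp : 0 < p.2) (a b : Xi × ℝ) :
    fderiv ℝ (fderiv ℝ (fun p : Xi × ℝ => ψ p.1 p.2)) p b a
      = fderiv ℝ (fderiv ℝ (fun p : Xi × ℝ => ψ p.1 p.2)) p a b := by
  have := (psi_contDiffAt hψ p hp).isSymmSndFDerivAt (by simp; norm_num)
  exact this b a

lemma dXi_dXi_symm {ψ : Xi → ℝ → ℝ} (hψ : PsiC3 ψ) (A B : Idx) (ξ : Xi) (θ : ℝ) (hθ : 0 < θ) :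
    dXi A (dXi B ψ) ξ θ = dXi B (dXi A ψ) ξ θ := by
  rw [dXi_eq _ _ _ _ (dXi_diff hψ B (ξ, θ) hθ), dXi_eq _ _ _ _ (dXi_diff hψ A (ξ, θ) hθ),
    (dXi_ev hψ B (ξ, θ) hθ).fderiv_eq, (dXi_ev hψ A (ξ, θ) hθ).fderiv_eq,
    fderiv_apply_const hψ _ hθ, fderiv_apply_const hψ _ hθ, psi_symm hψ _ hθ]

lemma dTh_dXi_symm {ψ : Xi → ℝ → ℝ} (hψ : PsiC3 ψ) (B : Idx) (ξ : Xi) (θ : ℝ) (hθ : 0 < θ) :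
    dXi B (etaHat ψ) ξ θ = - dTh (dXi B ψ) ξ θ := by
  have h1 : dXi B (etaHat ψ) ξ θ = - dXi B (dTh ψ) ξ θ := by
    unfold dXi etaHat
    exact deriv.fun_neg
  rw [h1, dXi_eq _ _ _ _ (dTh_diff hψ (ξ, θ) hθ), dTh_eq _ _ _ (dXi_diff hψ B (ξ, θ) hθ),
    (dXi_ev hψ B (ξ, θ) hθ).fderiv_eq, (dTh_ev hψ (ξ, θ) hθ).fderiv_eq,
    fderiv_apply_const hψ _ hθ, fderiv_apply_const hψ _ hθ, psi_symm hψ _ hθ]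

lemma eta_diff {ψ : Xi → ℝ → ℝ} (hψ : PsiC3 ψ) (p : Xi × ℝ) (hp : 0 < p.2) :
    DifferentiableAt ℝ (fun q : Xi × ℝ => etaHat ψ q.1 q.2) p := (dTh_diff hψ p hp).neg

lemma cof3_eq (F : Mat3) (i α : Fin 3) : cof3 F i α =
    F (i+1) (α+1) * F (i+2) (α+2) - F (i+1) (α+2) * F (i+2) (α+1) := by
  fin_cases i <;> fin_cases α <;>
    simp [cof3, eps3, Fin.sum_univ_three] <;> ring

lemma det3_eq (F : Mat3) : det3 F =
    F 0 0 * (F 1 1 * F 2 2 - F 1 2 * F 2 1) + F 0 1 * (F 1 2 * F 2 0 - F 1 0 * F 2 2)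
      + F 0 2 * (F 1 0 * F 2 1 - F 1 1 * F 2 0) := by
  simp [det3, eps3, Fin.sum_univ_three]; ring

/-- explicit form of the derivatives of the null Lagrangians -/
def dPhiE : Idx → Fin 3 → Fin 3 → Mat3 → ℝ
  | .inl (j, β), i, α, _ => if j = i ∧ β = α then 1 else 0
  | .inr (.inl (j, β)), i, α, F => ∑ k, ∑ γ, eps3 j i k * eps3 β α γ * F k γ
  | .inr (.inr _), i, α, F => cof3 F i α

lemma Phi_upd (B : Idx) (i α : Fin 3) (F : Mat3) (s : ℝ) :
    xiComp (Phi3 (updMat F i α s)) B = xiComp (Phi3 F) B + (s - F i α) * dPhiE B i α F := by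
  rcases B with ⟨j, β⟩ | ⟨j, β⟩ | u
  · by_cases hj : j = i
    · subst hj
      by_cases hb : β = α
      · subst hb; simp [updMat, xiComp, Phi3, dPhiE]
      · simp [updMat, xiComp, Phi3, dPhiE, hb]
    · simp [updMat, xiComp, Phi3, dPhiE, hj]
  · simp only [xiComp, Phi3, dPhiE, cof3_eq, updMat]
    fin_cases j <;> fin_cases i <;> fin_cases β <;> fin_cases α <;>
      simp [eps3, Fin.sum_univ_three, Function.update_apply] <;> ring
  · simp only [xiComp, Phi3, dPhiE, det3_eq, cof3_eq, updMat]
    fin_cases i <;> fin_cases α <;>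
      simp [Function.update_apply] <;> ring

lemma dPhi_eq (B : Idx) (i α : Fin 3) (F : Mat3) : dPhi B i α F = dPhiE B i α F := by
  unfold dPhi
  simp only [Phi_upd]
  have := (((hasDerivAt_id (F i α)).sub_const (F i α)).mul_const (dPhiE B i α F)).const_add
    (xiComp (Phi3 F) B)
  simpa using this.deriv

/-- derivative of the explicit form in direction G -/
def dPhiE' : Idx → Fin 3 → Fin 3 → Mat3 → Mat3 → ℝ
  | .inl _, _, _, _, _ => 0
  | .inr (.inl (j, β)), i, α, _, G => ∑ k, ∑ γ, eps3 j i k * eps3 β α γ * G k γ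
  | .inr (.inr _), i, α, F, G =>
      (G (i+1) (α+1) * F (i+2) (α+2) + F (i+1) (α+1) * G (i+2) (α+2))
      - (G (i+1) (α+2) * F (i+2) (α+1) + F (i+1) (α+2) * G (i+2) (α+1))

lemma dPhi_hasDeriv (B : Idx) (i α : Fin 3) (F : ℝ → Mat3) (G : Mat3) (s : ℝ)
    (hF : ∀ j β, HasDerivAt (fun s => F s j β) (G j β) s) :
    HasDerivAt (fun s => dPhi B i α (F s)) (dPhiE' B i α (F s) G) s := by
  simp only [dPhi_eq]
  rcases B with ⟨j, β⟩ | ⟨j, β⟩ | u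
  · simp only [dPhiE, dPhiE']; exact hasDerivAt_const _ _
  · simp only [dPhiE, dPhiE']
    exact HasDerivAt.fun_sum fun k _ => HasDerivAt.fun_sum fun γ _ => (hF k γ).const_mul _
  · simp only [dPhiE, dPhiE', cof3_eq]
    exact ((hF _ _).mul (hF _ _)).sub ((hF _ _).mul (hF _ _))

/-- Piola identity -/
lemma piola (B : Idx) (i : Fin 3) (F : Mat3) (G : Fin 3 → Mat3)
    (hG : ∀ j α β, G α j β = G β j α) : ∑ α, dPhiE' B i α F (G α) = 0 := by
  rcases B with ⟨j, β⟩ | ⟨j, β⟩ | u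
  · simp [dPhiE']
  · simp only [dPhiE']
    rw [Finset.sum_comm]
    refine Finset.sum_eq_zero fun k _ => ?_
    have h01 := hG k 0 1
    have h02 := hG k 0 2
    have h12 := hG k 1 2
    fin_cases β <;> simp [eps3, Fin.sum_univ_three, h01, h02, h12]
  · simp only [dPhiE', Fin.sum_univ_three]
    have h01 := fun k => hG k 0 1
    have h02 := fun k => hG k 0 2
    have h12 := fun k => hG k 1 2
    simp [h01, h02, h12]
    ring

lemma hasDeriv_pdx (α : Fin 3) (f : Vec3 → ℝ → ℝ) (x : Vec3) (t : ℝ)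
    (hf : DifferentiableAt ℝ (fun p : Vec3 × ℝ => f p.1 p.2) (x, t)) :
    HasDerivAt (fun s => f (Function.update x α s) t) (pdx α f x t) (x α) := by
  have hc : DifferentiableAt ℝ (fun s : ℝ => ((Function.update x α s, t) : Vec3 × ℝ)) (x α) :=
    (hasDerivAt_update x α (x α)).differentiableAt.prodMk (differentiableAt_const _)
  have h0 : ((Function.update x α (x α), t) : Vec3 × ℝ) = (x, t) := by simp
  have := DifferentiableAt.comp (f := fun s : ℝ => ((Function.update x α s, t) : Vec3 × ℝ))
    (x α) (by rw [h0]; exact hf) hc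
  exact this.hasDerivAt

lemma diff_time {E : Type*} [NormedAddCommGroup E] [NormedSpace ℝ E]
    (f : Vec3 → ℝ → E) (x : Vec3) (t : ℝ)
    (hf : DifferentiableAt ℝ (fun p : Vec3 × ℝ => f p.1 p.2) (x, t)) :
    DifferentiableAt ℝ (fun s => f x s) t :=
  DifferentiableAt.comp (f := fun s : ℝ => ((x, s) : Vec3 × ℝ)) t hf
    ((differentiableAt_const _).prodMk differentiableAt_id)

lemma hasDeriv_pdt (f : Vec3 → ℝ → ℝ) (x : Vec3) (t : ℝ)
    (hf : DifferentiableAt ℝ (fun p : Vec3 × ℝ => f p.1 p.2) (x, t)) :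
    HasDerivAt (fun s => f x s) (pdt f x t) t := (diff_time f x t hf).hasDerivAt

lemma comp_field (g : Xi → ℝ → ℝ) (ξf : Vec3 → ℝ → Xi) (θf : Vec3 → ℝ → ℝ) (x : Vec3) (t : ℝ)
    (hg : DifferentiableAt ℝ (fun p : Xi × ℝ => g p.1 p.2) (ξf x t, θf x t))
    (hξ : DifferentiableAt ℝ (fun p : Vec3 × ℝ => ξf p.1 p.2) (x, t))
    (hθ : DifferentiableAt ℝ (fun p : Vec3 × ℝ => θf p.1 p.2) (x, t)) :
    DifferentiableAt ℝ (fun p : Vec3 × ℝ => g (ξf p.1 p.2) (θf p.1 p.2)) (x, t) :=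
  DifferentiableAt.comp (f := fun p : Vec3 × ℝ => ((ξf p.1 p.2, θf p.1 p.2) : Xi × ℝ))
    (x, t) hg (hξ.prodMk hθ)

lemma flux_deriv {ι : Type*} [Fintype ι] (p p' : ι → ℝ → ℝ) (φ : ι → Fin 3 → ℝ → ℝ)
    (v v' Z Z' : Fin 3 → ℝ → ℝ) (θ θ' q q' : ℝ → ℝ) (s : ℝ)
    (px px' : ι → ℝ) (φx : ι → Fin 3 → ℝ) (vx vx' Zx Zx' : Fin 3 → ℝ) (θx θx' qx qx' : ℝ)
    (hp : ∀ B, HasDerivAt (p B) (px B) s) (hp' : ∀ B, HasDerivAt (p' B) (px' B) s)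
    (hφ : ∀ B i, HasDerivAt (φ B i) (φx B i) s)
    (hv : ∀ i, HasDerivAt (v i) (vx i) s) (hv' : ∀ i, HasDerivAt (v' i) (vx' i) s)
    (hZ : ∀ i, HasDerivAt (Z i) (Zx i) s) (hZ' : ∀ i, HasDerivAt (Z' i) (Zx' i) s)
    (hθ : HasDerivAt θ θx s) (hθ' : HasDerivAt θ' θx' s)
    (hq : HasDerivAt q qx s) (hq' : HasDerivAt q' qx' s) :
    HasDerivAt (fun s => (∑ i, (∑ B, (p B s - p' B s) * φ B i s) * (v i s - v' i s))
        + (∑ i, (Z i s - Z' i s) * (v i s - v' i s)) + (θ s - θ' s) * (q s - q' s))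
      ((∑ i, ((∑ B, ((px B - px' B) * φ B i s + (p B s - p' B s) * φx B i)) * (v i s - v' i s)
            + (∑ B, (p B s - p' B s) * φ B i s) * (vx i - vx' i)))
        + (∑ i, ((Zx i - Zx' i) * (v i s - v' i s) + (Z i s - Z' i s) * (vx i - vx' i)))
        + ((θx - θx') * (q s - q' s) + (θ s - θ' s) * (qx - qx'))) s := by
  refine ((HasDerivAt.fun_sum fun i _ => ?_).add (HasDerivAt.fun_sum fun i _ => ?_)).add ?_
  · exact (HasDerivAt.fun_sum fun B _ => ((hp B).sub (hp' B)).mul (hφ B i)).mul ((hv i).sub (hv' i))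
  · exact ((hZ i).sub (hZ' i)).mul ((hv i).sub (hv' i))
  · exact (hθ.sub hθ').mul (hq.sub hq')

lemma ent_deriv {ι : Type*} [Fintype ι] (e e' θ θ' η η' : ℝ → ℝ) (p' X X' : ι → ℝ → ℝ)
    (v v' : Fin 3 → ℝ → ℝ) (s : ℝ) (et et' θt θt' ηt ηt' : ℝ) (pt' Xt Xt' : ι → ℝ)
    (vt vt' : Fin 3 → ℝ)
    (he : HasDerivAt e et s) (he' : HasDerivAt e' et' s)
    (hθ : HasDerivAt θ θt s) (hθ' : HasDerivAt θ' θt' s)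
    (hη : HasDerivAt η ηt s) (hη' : HasDerivAt η' ηt' s)
    (hp' : ∀ B, HasDerivAt (p' B) (pt' B) s)
    (hX : ∀ B, HasDerivAt (X B) (Xt B) s) (hX' : ∀ B, HasDerivAt (X' B) (Xt' B) s)
    (hv : ∀ i, HasDerivAt (v i) (vt i) s) (hv' : ∀ i, HasDerivAt (v' i) (vt' i) s) :
    HasDerivAt (fun s => (e s - e' s - (∑ B, p' B s * (X B s - X' B s)) + η' s * (θ s - θ' s))
        + (1/2) * (∑ i, (v i s - v' i s)^2) + (η s - η' s) * (θ s - θ' s))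
      ((et - et' - (∑ B, (pt' B * (X B s - X' B s) + p' B s * (Xt B - Xt' B)))
          + (ηt' * (θ s - θ' s) + η' s * (θt - θt')))
        + (∑ i, (v i s - v' i s) * (vt i - vt' i))
        + ((ηt - ηt') * (θ s - θ' s) + (η s - η' s) * (θt - θt'))) s := by
  refine ((((he.sub he').sub (HasDerivAt.fun_sum fun B _ => ?_)).add
    (hη'.mul (hθ.sub hθ'))).add ?_).add ((hη.sub hη').mul (hθ.sub hθ'))
  · exact (hp' B).mul ((hX B).sub (hX' B))
  · have := (HasDerivAt.fun_sum (u := Finset.univ)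
      fun i _ => ((hv i).sub (hv' i)).pow 2).const_mul (1/2 : ℝ)
    refine this.congr_deriv ?_
    rw [Finset.mul_sum]
    refine Finset.sum_congr rfl fun i _ => ?_
    simp; ring

lemma time_alg {ι : Type*} [Fintype ι] (p p' Xt Xt' dx T : ι → ℝ) (P : ι → ι → ℝ)
    (Tη η η' θ θ' θt θt' ηt ηt' k et et' : ℝ) (pt' : ι → ℝ)
    (hP : ∀ A B, P A B = P B A)
    (het : et = ∑ B, p B * Xt B + -η * θt) (het' : et' = ∑ B, p' B * Xt' B + -η' * θt')
    (hpt : ∀ B, pt' B = ∑ A, P A B * Xt' A + T B * θt')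
    (hη : ηt' = ∑ B, -T B * Xt' B + Tη * θt') :
    (et - et' - (∑ B, (pt' B * dx B + p' B * (Xt B - Xt' B)))
          + (ηt' * (θ - θ') + η' * (θt - θt')))
        + k + ((ηt - ηt') * (θ - θ') + (η - η') * (θt - θt'))
    = -θt' * (η - η' - (∑ B, -T B * dx B) - Tη * (θ - θ'))
      + (∑ B, Xt' B * (p B - p' B - (∑ A, P A B * dx A) - T B * (θ - θ')))
      + (∑ B, (p B - p' B) * (Xt B - Xt' B)) + (ηt - ηt') * (θ - θ') + k := by
  have h1 : ∑ B, (∑ A, P A B * Xt' A) * dx B = ∑ B, Xt' B * ∑ A, P A B * dx A := by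
    simp only [Finset.mul_sum, Finset.sum_mul]
    rw [Finset.sum_comm]
    refine Finset.sum_congr rfl fun A _ => Finset.sum_congr rfl fun B _ => ?_
    rw [hP A B]; ring
  have h2 : ∑ B, (pt' B * dx B + p' B * (Xt B - Xt' B))
      = (∑ B, Xt' B * ∑ A, P A B * dx A) + θt' * (∑ B, T B * dx B)
        + (∑ B, p' B * Xt B) - ∑ B, p' B * Xt' B := by
    rw [← h1, Finset.mul_sum, ← Finset.sum_add_distrib, ← Finset.sum_add_distrib,
      ← Finset.sum_sub_distrib]
    refine Finset.sum_congr rfl fun B _ => ?_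
    rw [hpt]; ring
  have h3 : (∑ B, Xt' B * (p B - p' B - (∑ A, P A B * dx A) - T B * (θ - θ')))
      = (∑ B, p B * Xt' B) - (∑ B, p' B * Xt' B) - (∑ B, Xt' B * ∑ A, P A B * dx A)
        - (θ - θ') * ∑ B, T B * Xt' B := by
    rw [Finset.mul_sum, ← Finset.sum_sub_distrib, ← Finset.sum_sub_distrib,
      ← Finset.sum_sub_distrib]
    refine Finset.sum_congr rfl fun B _ => ?_
    ring
  have h4 : (∑ B, (p B - p' B) * (Xt B - Xt' B)) = (∑ B, p B * Xt B) - (∑ B, p B * Xt' B)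
      - (∑ B, p' B * Xt B) + (∑ B, p' B * Xt' B) := by
    rw [← Finset.sum_sub_distrib, ← Finset.sum_sub_distrib, ← Finset.sum_add_distrib]
    refine Finset.sum_congr rfl fun B _ => ?_
    ring
  rw [h2, h3, h4, het, het', hη]
  simp only [neg_mul, Finset.sum_neg_distrib]
  ring

lemma elastic_alg {ι : Type*} [Fintype ι] (p p' Xt Xt' : ι → ℝ) (φ φ' φx φx' : ι → Fin 3 → Fin 3 → ℝ)
    (px px' : ι → Fin 3 → ℝ) (v v' S S' : Fin 3 → ℝ) (vx vx' : Fin 3 → Fin 3 → ℝ)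
    (hφ : ∀ B i, ∑ α, φx B i α = 0) (hφ' : ∀ B i, ∑ α, φx' B i α = 0)
    (hX : ∀ B, Xt B = ∑ α, ∑ i, (φx B i α * v i + φ B i α * vx i α))
    (hX' : ∀ B, Xt' B = ∑ α, ∑ i, (φx' B i α * v' i + φ' B i α * vx' i α))
    (hS : ∀ i, S i = ∑ α, ∑ B, (px B α * φ B i α + p B * φx B i α))
    (hS' : ∀ i, S' i = ∑ α, ∑ B, (px' B α * φ' B i α + p' B * φx' B i α)) :
    (∑ B, (p B - p' B) * (Xt B - Xt' B)) + ∑ i, (v i - v' i) * (S i - S' i)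
    - ∑ α, (∑ i, ((∑ B, ((px B α - px' B α) * φ B i α + (p B - p' B) * φx B i α)) * (v i - v' i)
            + (∑ B, (p B - p' B) * φ B i α) * (vx i α - vx' i α)))
    = (∑ α, ∑ i, ∑ B, px' B α * (φ B i α - φ' B i α) * (v i - v' i))
      + (∑ α, ∑ i, vx' i α * (∑ B, (p B - p' B) * (φ B i α - φ' B i α))) := by
  have c3 : ∀ f : ι → Fin 3 → Fin 3 → ℝ, ∑ B, ∑ α, ∑ i, f B α i = ∑ α, ∑ i, ∑ B, f B α i := by
    intro f
    rw [Finset.sum_comm]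
    exact Finset.sum_congr rfl fun α _ => Finset.sum_comm
  have k0 : ∀ (g : ι → Fin 3 → ℝ) (χ : ι → Fin 3 → Fin 3 → ℝ), (∀ B i, ∑ α, χ B i α = 0) →
      ∑ α, ∑ i, ∑ B, g B i * χ B i α = 0 := by
    intro g χ h
    rw [Finset.sum_comm]
    refine Finset.sum_eq_zero fun i _ => ?_
    rw [Finset.sum_comm]
    refine Finset.sum_eq_zero fun B _ => ?_
    rw [← Finset.mul_sum, h, mul_zero]
  have e1 : (∑ B, (p B - p' B) * (Xt B - Xt' B)) = ∑ α, ∑ i, ∑ B, (p B - p' B) *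
      ((φx B i α * v i + φ B i α * vx i α) - (φx' B i α * v' i + φ' B i α * vx' i α)) := by
    rw [← c3]
    refine Finset.sum_congr rfl fun B _ => ?_
    rw [hX, hX']
    simp only [Finset.mul_sum, ← Finset.sum_sub_distrib]
  have e2 : ∑ i, (v i - v' i) * (S i - S' i) = ∑ α, ∑ i, ∑ B, (v i - v' i) *
      ((px B α * φ B i α + p B * φx B i α) - (px' B α * φ' B i α + p' B * φx' B i α)) := by
    rw [Finset.sum_comm]
    refine Finset.sum_congr rfl fun i _ => ?_
    rw [hS, hS']
    simp only [Finset.mul_sum, ← Finset.sum_sub_distrib]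
  have z1 := k0 (fun B i => (p B - p' B) * v i + p B * (v i - v' i)
    - (p B - p' B) * (v i - v' i)) φx hφ
  have z2 := k0 (fun B i => - (p B - p' B) * v' i - p' B * (v i - v' i)) φx' hφ'
  rw [e1, e2, ← sub_eq_zero]
  rw [← add_zero (0:ℝ)]
  nth_rewrite 1 [← z1]
  rw [← z2]
  simp only [Finset.mul_sum, Finset.sum_mul, ← Finset.sum_sub_distrib, ← Finset.sum_add_distrib]
  refine Finset.sum_congr rfl fun α _ => Finset.sum_congr rfl fun i _ =>
    Finset.sum_congr rfl fun B _ => ?_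
  ring

lemma visc_alg (v v' zx zx' : Fin 3 → ℝ) (vx vx' Z Z' Zx Zx' : Fin 3 → Fin 3 → ℝ) (θ θ' : ℝ)
    (hθ : 0 < θ) (hθ' : 0 < θ') (hz : ∀ i, zx i = ∑ α, Zx i α) (hz' : ∀ i, zx' i = ∑ α, Zx' i α) :
    ∑ i, (v i - v' i) * (zx i - zx' i)
    - ∑ α, (∑ i, ((Zx i α - Zx' i α) * (v i - v' i) + (Z i α - Z' i α) * (vx i α - vx' i α)))
    + (θ - θ') * ((∑ α, ∑ i, vx i α * Z i α) / θ - (∑ α, ∑ i, vx' i α * Z' i α) / θ')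
    = - (θ * θ' * ∑ α, ∑ i, (vx i α / θ - vx' i α / θ') * (Z i α / θ - Z' i α / θ')) := by
  have e2 : ∑ i, (v i - v' i) * (zx i - zx' i) = ∑ α, ∑ i, (v i - v' i) * (Zx i α - Zx' i α) := by
    rw [Finset.sum_comm]
    refine Finset.sum_congr rfl fun i _ => ?_
    rw [hz, hz', ← Finset.sum_sub_distrib, Finset.mul_sum]
  rw [e2]
  simp only [Finset.mul_sum, Finset.sum_div, ← Finset.sum_sub_distrib, ← Finset.sum_add_distrib,
    ← Finset.sum_neg_distrib]
  refine Finset.sum_congr rfl fun α _ => Finset.sum_congr rfl fun i _ => ?_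
  field_simp
  ring

lemma heat_alg (θx θx' Q Q' qx qx' : Fin 3 → ℝ) (θ θ' : ℝ) (hθ : 0 < θ) (hθ' : 0 < θ') :
    (θ - θ') * ((∑ α, qx α + (∑ α, θx α * Q α) / θ^2) - (∑ α, qx' α + (∑ α, θx' α * Q' α) / θ'^2))
    - ∑ α, ((θx α - θx' α) * (Q α / θ - Q' α / θ') + (θ - θ') * (qx α - qx' α))
    = - ∑ α, (θ' * Q α / θ - θ * Q' α / θ') * (θx α / θ - θx' α / θ') := by
  simp only [Finset.mul_sum, Finset.sum_div, ← Finset.sum_sub_distrib, ← Finset.sum_add_distrib,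
    ← Finset.sum_neg_distrib]
  refine Finset.sum_congr rfl fun α _ => ?_
  field_simp
  ring


/-- consequences of the system for a single solution -/
lemma sol_facts (ψ : Xi → ℝ → ℝ) (hψ : PsiC3 ψ)
    (ξf : Vec3 → ℝ → Xi) (vf : Vec3 → ℝ → Vec3) (θf : Vec3 → ℝ → ℝ)
    (Z : Vec3 → ℝ → Mat3) (Q : Vec3 → ℝ → Vec3) (r : Vec3 → ℝ → ℝ)
    (hreg : FieldC 2 ξf ∧ FieldC 2 vf ∧ FieldC 2 θf) (hZQ : FieldC 1 Z ∧ FieldC 1 Q)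
    (x : Vec3) (t : ℝ) (hθ : 0 < θf x t) (hsys : AugSys ψ ξf vf θf Z Q r x t) :
    (∀ i α, DifferentiableAt ℝ (fun p : Vec3 × ℝ => Z p.1 p.2 i α) (x, t)) ∧
    (∀ α, DifferentiableAt ℝ (fun p : Vec3 × ℝ => Q p.1 p.2 α / θf p.1 p.2) (x, t)) ∧
    (∀ i, DifferentiableAt ℝ (fun p : Vec3 × ℝ => vf p.1 p.2 i) (x, t)) ∧
    DifferentiableAt ℝ (fun p : Vec3 × ℝ => ξf p.1 p.2) (x, t) ∧
    DifferentiableAt ℝ (fun p : Vec3 × ℝ => θf p.1 p.2) (x, t) ∧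
    (∀ B, DifferentiableAt ℝ (fun p : Vec3 × ℝ => xiComp (ξf p.1 p.2) B) (x, t)) ∧
    (∀ B, DifferentiableAt ℝ (fun p : Vec3 × ℝ => dXi B ψ (ξf p.1 p.2) (θf p.1 p.2)) (x, t)) ∧
    DifferentiableAt ℝ (fun p : Vec3 × ℝ => etaHat ψ (ξf p.1 p.2) (θf p.1 p.2)) (x, t) ∧
    (∀ B i α, HasDerivAt (fun s => dPhi B i α (ξf (Function.update x α s) t).1)
      (pdx α (fun y s => dPhi B i α (ξf y s).1) x t) (x α)) ∧
    (∀ B i, ∑ α, pdx α (fun y s => dPhi B i α (ξf y s).1) x t = 0) ∧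
    (∀ B, pdt (fun y s => xiComp (ξf y s) B) x t
      = ∑ α, ∑ i, (pdx α (fun y s => dPhi B i α (ξf y s).1) x t * vf x t i
          + dPhi B i α (ξf x t).1 * pdx α (fun y s => vf y s i) x t)) ∧
    (∀ i, pdt (fun y s => vf y s i) x t
      = (∑ α, ∑ B, (pdx α (fun y s => dXi B ψ (ξf y s) (θf y s)) x t * dPhi B i α (ξf x t).1
          + dXi B ψ (ξf x t) (θf x t) * pdx α (fun y s => dPhi B i α (ξf y s).1) x t))
        + ∑ α, pdx α (fun y s => Z y s i α) x t) := by
  obtain ⟨hξ, hv, hθr⟩ := hreg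
  obtain ⟨hZ, hQ⟩ := hZQ
  obtain ⟨s1, s2, -, s4⟩ := hsys
  have dξ : DifferentiableAt ℝ (fun p : Vec3 × ℝ => ξf p.1 p.2) (x, t) :=
    (ContDiff.differentiable hξ (by norm_num)) _
  have dv0 : DifferentiableAt ℝ (fun p : Vec3 × ℝ => vf p.1 p.2) (x, t) :=
    (ContDiff.differentiable hv (by norm_num)) _
  have dθ : DifferentiableAt ℝ (fun p : Vec3 × ℝ => θf p.1 p.2) (x, t) :=
    (ContDiff.differentiable hθr (by norm_num)) _
  have dZ0 : DifferentiableAt ℝ (fun p : Vec3 × ℝ => Z p.1 p.2) (x, t) :=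
    (ContDiff.differentiable hZ (by norm_num)) _
  have dQ0 : DifferentiableAt ℝ (fun p : Vec3 × ℝ => Q p.1 p.2) (x, t) :=
    (ContDiff.differentiable hQ (by norm_num)) _
  have dv : ∀ i, DifferentiableAt ℝ (fun p : Vec3 × ℝ => vf p.1 p.2 i) (x, t) :=
    fun i => differentiableAt_pi.1 dv0 i
  have dZ : ∀ i α, DifferentiableAt ℝ (fun p : Vec3 × ℝ => Z p.1 p.2 i α) (x, t) :=
    fun i α => differentiableAt_pi.1 (differentiableAt_pi.1 dZ0 i) α
  have dQ : ∀ α, DifferentiableAt ℝ (fun p : Vec3 × ℝ => Q p.1 p.2 α / θf p.1 p.2) (x, t) :=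
    fun α => by
      have hne : (fun p : Vec3 × ℝ => θf p.1 p.2) (x, t) ≠ 0 := hθ.ne'
      have h1 := (differentiableAt_pi.1 dQ0 α).mul (dθ.inv hne)
      simp only [div_eq_mul_inv]
      exact h1
  have dC : ∀ B, DifferentiableAt ℝ (fun p : Vec3 × ℝ => xiComp (ξf p.1 p.2) B) (x, t) :=
    fun B => (xiL B).differentiableAt.comp (x, t) dξ
  have dp : ∀ B, DifferentiableAt ℝ
      (fun p : Vec3 × ℝ => dXi B ψ (ξf p.1 p.2) (θf p.1 p.2)) (x, t) :=
    fun B => comp_field (dXi B ψ) ξf θf x t (dXi_diff hψ B _ hθ) dξ dθ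
  have dη : DifferentiableAt ℝ
      (fun p : Vec3 × ℝ => etaHat ψ (ξf p.1 p.2) (θf p.1 p.2)) (x, t) :=
    comp_field (etaHat ψ) ξf θf x t (eta_diff hψ _ hθ) dξ dθ
  have hF : ∀ α j β, HasDerivAt (fun s => (ξf (Function.update x α s) t).1 j β)
      (pdx α (fun y s => (ξf y s).1 j β) x t) (x α) :=
    fun α j β => hasDeriv_pdx α (fun y s => (ξf y s).1 j β) x t (dC (.inl (j, β)))
  have hφ0 : ∀ B i α, HasDerivAt (fun s => dPhi B i α (ξf (Function.update x α s) t).1)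
      (dPhiE' B i α (ξf x t).1 (fun j β => pdx α (fun y s => (ξf y s).1 j β) x t)) (x α) := by
    intro B i α
    have := dPhi_hasDeriv B i α (fun s => (ξf (Function.update x α s) t).1)
      (fun j β => pdx α (fun y s => (ξf y s).1 j β) x t) (x α) (hF α)
    simpa only [Function.update_eq_self] using this
  have eφ : ∀ B i α, pdx α (fun y s => dPhi B i α (ξf y s).1) x t
      = dPhiE' B i α (ξf x t).1 (fun j β => pdx α (fun y s => (ξf y s).1 j β) x t) :=
    fun B i α => (hφ0 B i α).deriv
  have hφ : ∀ B i α, HasDerivAt (fun s => dPhi B i α (ξf (Function.update x α s) t).1)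
      (pdx α (fun y s => dPhi B i α (ξf y s).1) x t) (x α) :=
    fun B i α => by rw [eφ]; exact hφ0 B i α
  refine ⟨dZ, dQ, dv, dξ, dθ, dC, dp, dη, hφ, ?_, ?_, ?_⟩
  · intro B i
    simp only [eφ]
    exact piola B i (ξf x t).1 (fun α j β => pdx α (fun y s => (ξf y s).1 j β) x t)
      (fun j α β => s4 j α β)
  · intro B
    rw [s1 B]
    refine Finset.sum_congr rfl fun α _ => ?_
    have := (HasDerivAt.fun_sum (u := Finset.univ) fun i _ =>
      (hφ B i α).mul (hasDeriv_pdx α (fun y s => vf y s i) x t (dv i))).deriv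
    simp only [Function.update_eq_self] at this
    exact this
  · intro i
    rw [s2 i]
    congr 1
    refine Finset.sum_congr rfl fun α _ => ?_
    have := (HasDerivAt.fun_sum (u := Finset.univ) fun B _ =>
      (hasDeriv_pdx α (fun y s => dXi B ψ (ξf y s) (θf y s)) x t (dp B)).mul (hφ B i α)).deriv
    simp only [Function.update_eq_self] at this
    exact this

lemma chain_pdt (g : Xi → ℝ → ℝ) (ξf : Vec3 → ℝ → Xi) (θf : Vec3 → ℝ → ℝ) (x : Vec3) (t : ℝ)
    (hg : DifferentiableAt ℝ (fun p : Xi × ℝ => g p.1 p.2) (ξf x t, θf x t))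
    (hξ : DifferentiableAt ℝ (fun p : Vec3 × ℝ => ξf p.1 p.2) (x, t))
    (hθ : DifferentiableAt ℝ (fun p : Vec3 × ℝ => θf p.1 p.2) (x, t)) :
    HasDerivAt (fun s => g (ξf x s) (θf x s))
      (∑ B : Idx, dXi B g (ξf x t) (θf x t) * pdt (fun y s => xiComp (ξf y s) B) x t
        + dTh g (ξf x t) (θf x t) * pdt θf x t) t :=
  chain_rule g (fun s => ξf x s) (fun s => θf x s) t hg (diff_time ξf x t hξ) (diff_time θf x t hθ)

/-- the relative entropy identity (3.8) for two C² solutions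
(ξ,v,θ) and (ξ̄,v̄,θ̄) of the augmented thermoviscoelasticity system with
fields (Z,Q,r) and (Z̄,Q̄,r̄), each satisfying its entropy identity. -/
theorem relative_entropy_identity
    (ψ : Xi → ℝ → ℝ) (hψ : PsiC3 ψ)
    (ξf : Vec3 → ℝ → Xi) (vf : Vec3 → ℝ → Vec3) (θf : Vec3 → ℝ → ℝ)
    (Z : Vec3 → ℝ → Mat3) (Q : Vec3 → ℝ → Vec3) (r : Vec3 → ℝ → ℝ)
    (ξg : Vec3 → ℝ → Xi) (vg : Vec3 → ℝ → Vec3) (θg : Vec3 → ℝ → ℝ)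
    (Z' : Vec3 → ℝ → Mat3) (Q' : Vec3 → ℝ → Vec3) (r' : Vec3 → ℝ → ℝ)
    (hreg : FieldC 2 ξf ∧ FieldC 2 vf ∧ FieldC 2 θf)
    (hreg' : FieldC 2 ξg ∧ FieldC 2 vg ∧ FieldC 2 θg)
    (hZQ : FieldC 1 Z ∧ FieldC 1 Q ∧ Continuous (fun p : Vec3 × ℝ => r p.1 p.2))
    (hZQ' : FieldC 1 Z' ∧ FieldC 1 Q' ∧ Continuous (fun p : Vec3 × ℝ => r' p.1 p.2))
    (hθpos : ∀ (x : Vec3) (t : ℝ), 0 < t → 0 < θf x t)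
    (hθpos' : ∀ (x : Vec3) (t : ℝ), 0 < t → 0 < θg x t)
    (hsys : ∀ (x : Vec3) (t : ℝ), 0 < t → AugSys ψ ξf vf θf Z Q r x t)
    (hsys' : ∀ (x : Vec3) (t : ℝ), 0 < t → AugSys ψ ξg vg θg Z' Q' r' x t)
    (hent : ∀ (x : Vec3) (t : ℝ), 0 < t → EntropyIdent ψ ξf vf θf Z Q r x t)
    (hent' : ∀ (x : Vec3) (t : ℝ), 0 < t → EntropyIdent ψ ξg vg θg Z' Q' r' x t) :
    ∀ (x : Vec3) (t : ℝ), 0 < t →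
      pdt (fun y s =>
            psiRel ψ (ξf y s) (θf y s) (ξg y s) (θg y s)
            + (1/2) * (∑ i, (vf y s i - vg y s i)^2)
            + (etaHat ψ (ξf y s) (θf y s) - etaHat ψ (ξg y s) (θg y s))
                * (θf y s - θg y s)) x t
      - ∑ α, pdx α (fun y s =>
            (∑ i, (∑ B : Idx,
              (dXi B ψ (ξf y s) (θf y s) - dXi B ψ (ξg y s) (θg y s))
                * dPhi B i α (ξf y s).1) * (vf y s i - vg y s i))
            + (∑ i, (Z y s i α - Z' y s i α) * (vf y s i - vg y s i))
            + (θf y s - θg y s) * (Q y s α / θf y s - Q' y s α / θg y s)) x t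
      =
      -(pdt θg x t) * etaRel ψ (ξf x t) (θf x t) (ξg x t) (θg x t)
      + (∑ B : Idx, pdt (fun y s => xiComp (ξg y s) B) x t
          * dXiRel B ψ (ξf x t) (θf x t) (ξg x t) (θg x t))
      + (∑ α, ∑ i, ∑ B : Idx,
          pdx α (fun y s => dXi B ψ (ξg y s) (θg y s)) x t
          * (dPhi B i α (ξf x t).1 - dPhi B i α (ξg x t).1)
          * (vf x t i - vg x t i))
      + (∑ α, ∑ i, pdx α (fun y s => vg y s i) x t
          * (∑ B : Idx, (dXi B ψ (ξf x t) (θf x t) - dXi B ψ (ξg x t) (θg x t))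
              * (dPhi B i α (ξf x t).1 - dPhi B i α (ξg x t).1)))
      - θf x t * θg x t * (∑ α, ∑ i,
          (pdx α (fun y s => vf y s i) x t / θf x t
            - pdx α (fun y s => vg y s i) x t / θg x t)
          * (Z x t i α / θf x t - Z' x t i α / θg x t))
      - (∑ α, (θg x t * Q x t α / θf x t - θf x t * Q' x t α / θg x t)
          * (pdx α θf x t / θf x t - pdx α θg x t / θg x t))
      + (θf x t - θg x t) * (r x t / θf x t - r' x t / θg x t) := by
  intro x t ht
  have hθ := hθpos x t ht
  have hθ' := hθpos' x t ht
  obtain ⟨dZ, dQ, dv, dξ, dθ, dC, dp, dη, hφ, hφ0, hX, hV⟩ :=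
    sol_facts ψ hψ ξf vf θf Z Q r hreg ⟨hZQ.1, hZQ.2.1⟩ x t hθ (hsys x t ht)
  obtain ⟨dZ', dQ', dv', dξ', dθ', dC', dp', dη', hφ', hφ0', hX', hV'⟩ :=
    sol_facts ψ hψ ξg vg θg Z' Q' r' hreg' ⟨hZQ'.1, hZQ'.2.1⟩ x t hθ' (hsys' x t ht)
  have E := hent x t ht
  have E' := hent' x t ht
  unfold EntropyIdent at E E'
  have he := chain_pdt ψ ξf θf x t
    ((psi_contDiffAt hψ (ξf x t, θf x t) hθ).differentiableAt (by norm_num)) dξ dθ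
  have he' := chain_pdt ψ ξg θg x t
    ((psi_contDiffAt hψ (ξg x t, θg x t) hθ').differentiableAt (by norm_num)) dξ' dθ'
  have hη' := chain_pdt (etaHat ψ) ξg θg x t (eta_diff hψ _ hθ') dξ' dθ'
  have hn : ∀ ξ θ, dTh ψ ξ θ = - etaHat ψ ξ θ := fun ξ θ => by simp only [etaHat, neg_neg]
  rw [hn] at he he'
  simp only [dTh_dXi_symm hψ _ _ _ hθ'] at hη'
  have hp' := fun B => chain_pdt (dXi B ψ) ξg θg x t (dXi_diff hψ B _ hθ') dξ' dθ'
  have hT := (ent_deriv (fun s => ψ (ξf x s) (θf x s)) (fun s => ψ (ξg x s) (θg x s))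
    (fun s => θf x s) (fun s => θg x s) (fun s => etaHat ψ (ξf x s) (θf x s))
    (fun s => etaHat ψ (ξg x s) (θg x s)) (fun B s => dXi B ψ (ξg x s) (θg x s))
    (fun B s => xiComp (ξf x s) B) (fun B s => xiComp (ξg x s) B)
    (fun i s => vf x s i) (fun i s => vg x s i) t _ _ _ _ _ _ _ _ _ _ _ he he'
    (hasDeriv_pdt θf x t dθ) (hasDeriv_pdt θg x t dθ')
    (hasDeriv_pdt (fun y s => etaHat ψ (ξf y s) (θf y s)) x t dη) hη' hp'
    (fun B => hasDeriv_pdt (fun y s => xiComp (ξf y s) B) x t (dC B))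
    (fun B => hasDeriv_pdt (fun y s => xiComp (ξg y s) B) x t (dC' B))
    (fun i => hasDeriv_pdt (fun y s => vf y s i) x t (dv i))
    (fun i => hasDeriv_pdt (fun y s => vg y s i) x t (dv' i))).deriv
  have hTA := time_alg (fun B => dXi B ψ (ξf x t) (θf x t)) (fun B => dXi B ψ (ξg x t) (θg x t))
    (fun B => pdt (fun y s => xiComp (ξf y s) B) x t)
    (fun B => pdt (fun y s => xiComp (ξg y s) B) x t)
    (fun B => xiComp (ξf x t) B - xiComp (ξg x t) B)
    (fun B => dTh (dXi B ψ) (ξg x t) (θg x t))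
    (fun A B => dXi A (dXi B ψ) (ξg x t) (θg x t))
    (dTh (etaHat ψ) (ξg x t) (θg x t)) (etaHat ψ (ξf x t) (θf x t)) (etaHat ψ (ξg x t) (θg x t))
    (θf x t) (θg x t) (pdt θf x t) (pdt θg x t)
    (pdt (fun y s => etaHat ψ (ξf y s) (θf y s)) x t) _
    (∑ i, (vf x t i - vg x t i)
      * (pdt (fun y s => vf y s i) x t - pdt (fun y s => vg y s i) x t)) _ _ _
    (fun A B => dXi_dXi_symm hψ A B _ _ hθ') rfl rfl (fun B => rfl) rfl
  have hTT := hT.trans hTA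
  have eη' : pdt (fun y s => etaHat ψ (ξg y s) (θg y s)) x t = _ := hη'.deriv
  rw [← eη'] at hTT
  have hXf : ∀ α, _ := fun α => (flux_deriv
    (fun B s => dXi B ψ (ξf (Function.update x α s) t) (θf (Function.update x α s) t))
    (fun B s => dXi B ψ (ξg (Function.update x α s) t) (θg (Function.update x α s) t))
    (fun B i s => dPhi B i α (ξf (Function.update x α s) t).1)
    (fun i s => vf (Function.update x α s) t i) (fun i s => vg (Function.update x α s) t i)
    (fun i s => Z (Function.update x α s) t i α) (fun i s => Z' (Function.update x α s) t i α)
    (fun s => θf (Function.update x α s) t) (fun s => θg (Function.update x α s) t)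
    (fun s => Q (Function.update x α s) t α / θf (Function.update x α s) t)
    (fun s => Q' (Function.update x α s) t α / θg (Function.update x α s) t) (x α)
    _ _ _ _ _ _ _ _ _ _ _
    (fun B => hasDeriv_pdx α (fun y s => dXi B ψ (ξf y s) (θf y s)) x t (dp B))
    (fun B => hasDeriv_pdx α (fun y s => dXi B ψ (ξg y s) (θg y s)) x t (dp' B))
    (fun B i => hφ B i α)
    (fun i => hasDeriv_pdx α (fun y s => vf y s i) x t (dv i))
    (fun i => hasDeriv_pdx α (fun y s => vg y s i) x t (dv' i))
    (fun i => hasDeriv_pdx α (fun y s => Z y s i α) x t (dZ i α))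
    (fun i => hasDeriv_pdx α (fun y s => Z' y s i α) x t (dZ' i α))
    (hasDeriv_pdx α θf x t dθ) (hasDeriv_pdx α θg x t dθ')
    (hasDeriv_pdx α (fun y s => Q y s α / θf y s) x t (dQ α))
    (hasDeriv_pdx α (fun y s => Q' y s α / θg y s) x t (dQ' α))).deriv
  simp only [Function.update_eq_self] at hXf
  have hEl := elastic_alg (fun B => dXi B ψ (ξf x t) (θf x t))
    (fun B => dXi B ψ (ξg x t) (θg x t))
    (fun B => pdt (fun y s => xiComp (ξf y s) B) x t)
    (fun B => pdt (fun y s => xiComp (ξg y s) B) x t)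
    (fun B i α => dPhi B i α (ξf x t).1) (fun B i α => dPhi B i α (ξg x t).1)
    (fun B i α => pdx α (fun y s => dPhi B i α (ξf y s).1) x t)
    (fun B i α => pdx α (fun y s => dPhi B i α (ξg y s).1) x t)
    (fun B α => pdx α (fun y s => dXi B ψ (ξf y s) (θf y s)) x t)
    (fun B α => pdx α (fun y s => dXi B ψ (ξg y s) (θg y s)) x t)
    (fun i => vf x t i) (fun i => vg x t i) _ _
    (fun i α => pdx α (fun y s => vf y s i) x t) (fun i α => pdx α (fun y s => vg y s i) x t)
    hφ0 hφ0' hX hX' (fun i => rfl) (fun i => rfl)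
  have hVi := visc_alg (fun i => vf x t i) (fun i => vg x t i) _ _
    (fun i α => pdx α (fun y s => vf y s i) x t) (fun i α => pdx α (fun y s => vg y s i) x t)
    (fun i α => Z x t i α) (fun i α => Z' x t i α)
    (fun i α => pdx α (fun y s => Z y s i α) x t) (fun i α => pdx α (fun y s => Z' y s i α) x t)
    (θf x t) (θg x t) hθ hθ' (fun i => rfl) (fun i => rfl)
  have hH := heat_alg (fun α => pdx α θf x t) (fun α => pdx α θg x t)
    (fun α => Q x t α) (fun α => Q' x t α)
    (fun α => pdx α (fun y s => Q y s α / θf y s) x t)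
    (fun α => pdx α (fun y s => Q' y s α / θg y s) x t) (θf x t) (θg x t) hθ hθ'
  have hk : ∑ i, (vf x t i - vg x t i)
      * (pdt (fun y s => vf y s i) x t - pdt (fun y s => vg y s i) x t) = _ + _ :=
    (Finset.sum_congr rfl fun i _ => by
      rw [hV i, hV' i, add_sub_add_comm, mul_add]).trans Finset.sum_add_distrib
  rw [hk] at hTT
  have hXX := Finset.sum_congr (rfl : (Finset.univ : Finset (Fin 3)) = Finset.univ)
    (fun α _ => hXf α)
  rw [Finset.sum_add_distrib, Finset.sum_add_distrib] at hXX
  have etaR : etaRel ψ (ξf x t) (θf x t) (ξg x t) (θg x t) = etaHat ψ (ξf x t) (θf x t)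
      - etaHat ψ (ξg x t) (θg x t)
      - (∑ B : Idx, -dTh (dXi B ψ) (ξg x t) (θg x t) * (xiComp (ξf x t) B - xiComp (ξg x t) B))
      - dTh (etaHat ψ) (ξg x t) (θg x t) * (θf x t - θg x t) := by
    unfold etaRel
    simp only [dTh_dXi_symm hψ _ _ _ hθ']
  rw [etaR]
  refine (congrArg₂ (· - ·) hTT hXX).trans ?_
  unfold dXiRel
  beta_reduce at hEl hVi hH ⊢
  linear_combination hEl + hVi + hH + (θf x t - θg x t) * (E - E')

end
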